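/- If ρ₁, ρ₂, ρ₃ > 0 do not satisfy the triangle inequality (i.e., ρ₁ > ρ₂ + ρ₃ or ρ₁ < |ρ₂ - ρ₃|), then for all integers ℓ₁, ℓ₂, the integral ∫₀^∞ J_{ℓ₁}(ρ₁λ) J_{ℓ₂}(ρ₂λ) J_{ℓ₁+ℓ₂}(ρ₃λ) λ dλ equals 0. -/

import Mathlib

open Real MeasureTheory Filter Topology Complex

/-- Bessel function of the first kind of integer order, via the standard
integral representation `J_n(x) = (1/π) ∫₀^π cos (n θ - x sin θ) dθ`. -/
noncomputable def besselJ (n : ℤ) (x : ℝ) : ℝ :=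
  (1 / Real.pi) * ∫ θ in (0:ℝ)..Real.pi, Real.cos (n * θ - x * Real.sin θ)

/-!
Suppose `a > b + c > 0` and `p + q + r = 0`, and let `I k` be the integral over `[0, T]` of
`J_p(at) J_{q+k}(bt) J_{r-k}(ct) t`. Bessel's equation, applied to `J_p(at)` and to the product
`J_{q+k}(bt) J_{r-k}(ct)`, shows that
`(a² - b² - c²) I k - b c (I (k+1) + I (k-1))` is a boundary term at `T`: the Wronskian of these two
functions. As `a² - b² - c² > 2 b c`, this three-term recurrence is diagonally dominant, and remains
so after weighting by `δ ^ |k|` with `δ < 1` close to `1`. The weight absorbs the polynomial growth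
in the orders of the bound `|J_n(x)| ≤ 6 (|n| + 1) / √x`, so a maximum principle transfers the
`O(T^{-1/2})` decay of the boundary terms to `I 0`. Orders `ℓ₁, ℓ₂, ℓ₁ + ℓ₂` reduce to sum zero by
`J_{-n} = (-1)^n J_n`, and any of the three frequencies may play the role of `a`.
-/

open Asymptotics

section BesselJ

variable (n : ℤ) (x : ℝ)

theorem abs_besselJ_le_one : |besselJ n x| ≤ 1 := by
  have h : ‖∫ θ in (0:ℝ)..π, Real.cos (n * θ - x * Real.sin θ)‖ ≤ 1 * |π - 0| :=
    intervalIntegral.norm_integral_le_of_norm_le_const fun _ _ => Real.abs_cos_le_one _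
  rw [sub_zero, abs_of_pos Real.pi_pos, one_mul, Real.norm_eq_abs] at h
  rwa [besselJ, abs_mul, abs_of_pos (one_div_pos.2 Real.pi_pos), one_div_mul_eq_div,
    div_le_one Real.pi_pos]

theorem besselJ_neg : besselJ (-n) x = (-1) ^ n * besselJ n x := by
  have reflect (θ : ℝ) : Real.cos (((-n : ℤ) : ℝ) * (π - θ) - x * Real.sin (π - θ)) =
      (-1) ^ n * Real.cos (n * θ - x * Real.sin θ) := by
    rw [Real.sin_pi_sub, ← Real.cos_sub_int_mul_pi]
    congr 1
    push_cast
    ring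
  have h := intervalIntegral.integral_comp_sub_left (a := 0) (b := π)
    (fun θ => Real.cos (((-n : ℤ) : ℝ) * θ - x * Real.sin θ)) π
  rw [sub_self, sub_zero] at h
  simp only [besselJ, ← h, reflect, intervalIntegral.integral_const_mul]
  ring

theorem intervalIntegrable_cos_mul_sub_mul_sin (a b : ℝ) :
    IntervalIntegrable (fun θ => Real.cos (n * θ - x * Real.sin θ)) volume a b :=
  Continuous.intervalIntegrable (by fun_prop) _ _

theorem besselJ_sub_one_add_besselJ_add_one :
    besselJ (n - 1) x + besselJ (n + 1) x =
      2 / π * ∫ θ in (0:ℝ)..π, Real.cos (n * θ - x * Real.sin θ) * Real.cos θ := by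
  have integrand_eq (θ : ℝ) : Real.cos (((n - 1 : ℤ) : ℝ) * θ - x * Real.sin θ) +
      Real.cos (((n + 1 : ℤ) : ℝ) * θ - x * Real.sin θ) =
      2 * (Real.cos (n * θ - x * Real.sin θ) * Real.cos θ) := by
    rw [← mul_assoc, Real.two_mul_cos_mul_cos]
    congr 2 <;> push_cast <;> ring
  rw [besselJ, besselJ, ← mul_add, ← intervalIntegral.integral_add
    (intervalIntegrable_cos_mul_sub_mul_sin _ _ _ _)
    (intervalIntegrable_cos_mul_sub_mul_sin _ _ _ _)]
  simp only [integrand_eq, intervalIntegral.integral_const_mul]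
  ring

theorem besselJ_sub_one_sub_besselJ_add_one :
    besselJ (n - 1) x - besselJ (n + 1) x =
      2 / π * ∫ θ in (0:ℝ)..π, Real.sin (n * θ - x * Real.sin θ) * Real.sin θ := by
  have integrand_eq (θ : ℝ) : Real.cos (((n - 1 : ℤ) : ℝ) * θ - x * Real.sin θ) -
      Real.cos (((n + 1 : ℤ) : ℝ) * θ - x * Real.sin θ) =
      2 * (Real.sin (n * θ - x * Real.sin θ) * Real.sin θ) := by
    rw [← mul_assoc, Real.two_mul_sin_mul_sin]
    congr 2 <;> push_cast <;> ring
  rw [besselJ, besselJ, ← mul_sub, ← intervalIntegral.integral_sub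
    (intervalIntegrable_cos_mul_sub_mul_sin _ _ _ _)
    (intervalIntegrable_cos_mul_sub_mul_sin _ _ _ _)]
  simp only [integrand_eq, intervalIntegral.integral_const_mul]
  ring

theorem hasDerivAt_besselJ :
    HasDerivAt (besselJ n) ((besselJ (n - 1) x - besselJ (n + 1) x) / 2) x := by
  have h : HasDerivAt (fun y => ∫ θ in (0:ℝ)..π, Real.cos (n * θ - y * Real.sin θ))
      (∫ θ in (0:ℝ)..π, Real.sin (n * θ - x * Real.sin θ) * Real.sin θ) x := by
    refine (intervalIntegral.hasDerivAt_integral_of_dominated_loc_of_deriv_le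
      (F' := fun y θ => Real.sin (n * θ - y * Real.sin θ) * Real.sin θ)
      (bound := fun _ => 1) univ_mem ?_ ?_ ?_ ?_ intervalIntegrable_const ?_).2
    · exact .of_forall fun y => Continuous.aestronglyMeasurable (by fun_prop)
    · exact Continuous.intervalIntegrable (by fun_prop) _ _
    · exact Continuous.aestronglyMeasurable (by fun_prop)
    · refine .of_forall fun θ _ y _ => ?_
      rw [norm_mul]
      exact mul_le_one₀ (Real.abs_sin_le_one _) (norm_nonneg _) (Real.abs_sin_le_one _)
    · refine .of_forall fun θ _ y _ => ?_
      exact (((hasDerivAt_id y).mul_const (Real.sin θ)).const_sub (n * θ)).cos.congr_deriv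
        (by simp)
  refine (h.const_mul (1 / π)).congr_deriv ?_
  rw [besselJ_sub_one_sub_besselJ_add_one]
  ring

theorem continuous_besselJ : Continuous (besselJ n) :=
  continuous_iff_continuousAt.2 fun x => (hasDerivAt_besselJ n x).continuousAt

theorem mul_besselJ_sub_one_add_besselJ_add_one :
    x * (besselJ (n - 1) x + besselJ (n + 1) x) = 2 * n * besselJ n x := by
  have total_derivative : ∫ θ in (0:ℝ)..π,
      (n * Real.cos (n * θ - x * Real.sin θ) -
        x * (Real.cos (n * θ - x * Real.sin θ) * Real.cos θ)) = 0 := by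
    rw [intervalIntegral.integral_eq_sub_of_hasDerivAt
      (f := fun θ => Real.sin (n * θ - x * Real.sin θ))]
    · simp [Real.sin_int_mul_pi]
    · intro θ _
      exact (((hasDerivAt_id θ).const_mul (n : ℝ)).sub
        ((Real.hasDerivAt_sin θ).const_mul x)).sin.congr_deriv
          (by simp only [id_eq, Pi.sub_apply, mul_one]; ring)
    · exact Continuous.intervalIntegrable (by fun_prop) _ _
  rw [intervalIntegral.integral_sub (Continuous.intervalIntegrable (by fun_prop) _ _)
      (Continuous.intervalIntegrable (by fun_prop) _ _), intervalIntegral.integral_const_mul,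
    intervalIntegral.integral_const_mul] at total_derivative
  rw [besselJ_sub_one_add_besselJ_add_one, besselJ]
  linear_combination (-2 / π) * total_derivative

variable {x}

theorem hasDerivAt_besselJ_raise (hx : x ≠ 0) :
    HasDerivAt (besselJ n) (n / x * besselJ n x - besselJ (n + 1) x) x := by
  refine (hasDerivAt_besselJ n x).congr_deriv ?_
  field_simp
  linear_combination mul_besselJ_sub_one_add_besselJ_add_one n x

theorem hasDerivAt_besselJ_lower (hx : x ≠ 0) :
    HasDerivAt (besselJ n) (besselJ (n - 1) x - n / x * besselJ n x) x := by
  refine (hasDerivAt_besselJ n x).congr_deriv ?_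
  field_simp
  linear_combination -mul_besselJ_sub_one_add_besselJ_add_one n x

end BesselJ

section Decay

/-- A Lyapunov function for the first-order system satisfied by `(J_n, J_{n+1})`, comparable to
`x (J_n² + J_{n+1}²)`; the cross term is chosen to remove the non-decaying part of the
derivative of the latter. -/
noncomputable def besselJEnergy (n : ℤ) (x : ℝ) : ℝ :=
  x * (besselJ n x ^ 2 + besselJ (n + 1) x ^ 2) - (2 * n + 1) * (besselJ n x * besselJ (n + 1) x)

theorem mul_mul_le_half_mul_sq_add_sq {s m : ℝ} (h : |s| ≤ m) (u v : ℝ) :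
    s * (u * v) ≤ m / 2 * (u ^ 2 + v ^ 2) := by
  obtain ⟨h₁, h₂⟩ := abs_le.1 h
  nlinarith [mul_nonneg (by linarith : 0 ≤ m + s) (sq_nonneg (u - v)),
    mul_nonneg (by linarith : 0 ≤ m - s) (sq_nonneg (u + v))]

variable (n : ℤ) {x : ℝ}

theorem half_mul_le_besselJEnergy (hx : |2 * (n : ℝ) + 1| ≤ x) :
    x / 2 * (besselJ n x ^ 2 + besselJ (n + 1) x ^ 2) ≤ besselJEnergy n x := by
  have := mul_mul_le_half_mul_sq_add_sq hx (besselJ n x) (besselJ (n + 1) x)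
  unfold besselJEnergy
  linarith

theorem besselJEnergy_le (hx : |2 * (n : ℝ) + 1| ≤ x) :
    besselJEnergy n x ≤ 3 * x / 2 * (besselJ n x ^ 2 + besselJ (n + 1) x ^ 2) := by
  have := mul_mul_le_half_mul_sq_add_sq ((abs_neg _).trans_le hx) (besselJ n x) (besselJ (n + 1) x)
  unfold besselJEnergy
  linarith

theorem hasDerivAt_besselJEnergy (hx : x ≠ 0) :
    HasDerivAt (besselJEnergy n) ((2 * n + 1) / x * (besselJ n x * besselJ (n + 1) x)) x := by
  have h₁ := hasDerivAt_besselJ_raise n hx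
  have h₂ := hasDerivAt_besselJ_lower (n + 1) hx
  refine (((hasDerivAt_id x).mul ((h₁.pow 2).add (h₂.pow 2))).sub
    ((h₁.mul h₂).const_mul (2 * (n : ℝ) + 1))).congr_deriv ?_
  simp only [Pi.add_apply, Pi.pow_apply, one_mul, id_eq, Nat.cast_ofNat, Nat.add_one_sub_one,
    pow_one, add_sub_cancel_right, Int.cast_add, Int.cast_one]
  field_simp
  ring

theorem one_le_abs_two_mul_add_one : 1 ≤ |2 * (n : ℝ) + 1| :=
  mod_cast Int.one_le_abs (by omega : 2 * n + 1 ≠ 0)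

theorem deriv_besselJEnergy_le (hx : |2 * (n : ℝ) + 1| ≤ x) :
    deriv (besselJEnergy n) x ≤ |2 * (n : ℝ) + 1| / x ^ 2 * besselJEnergy n x := by
  have hx₀ : 0 < x := by linarith [one_le_abs_two_mul_add_one n]
  rw [(hasDerivAt_besselJEnergy n hx₀.ne').deriv]
  calc (2 * n + 1) / x * (besselJ n x * besselJ (n + 1) x)
      = (2 * n + 1) * (besselJ n x * besselJ (n + 1) x) / x := by ring
    _ ≤ |2 * (n : ℝ) + 1| / 2 * (besselJ n x ^ 2 + besselJ (n + 1) x ^ 2) / x := by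
      gcongr ?_ / x
      exact mul_mul_le_half_mul_sq_add_sq le_rfl _ _
    _ = |2 * (n : ℝ) + 1| / x ^ 2 * (x / 2 * (besselJ n x ^ 2 + besselJ (n + 1) x ^ 2)) := by
      field_simp
    _ ≤ |2 * (n : ℝ) + 1| / x ^ 2 * besselJEnergy n x := by
      gcongr
      exact half_mul_le_besselJEnergy n hx

theorem antitoneOn_besselJEnergy_mul_exp :
    AntitoneOn (fun x => besselJEnergy n x * Real.exp (|2 * (n : ℝ) + 1| / x))
      (Set.Ici |2 * (n : ℝ) + 1|) := by
  set m := |2 * (n : ℝ) + 1|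
  have hm₀ : 0 < m := zero_lt_one.trans_le (one_le_abs_two_mul_add_one n)
  have hasDeriv (x : ℝ) (hx : m ≤ x) :
      HasDerivAt (fun x => besselJEnergy n x * Real.exp (m / x))
        ((deriv (besselJEnergy n) x - m / x ^ 2 * besselJEnergy n x) * Real.exp (m / x)) x := by
    have hx₀ : x ≠ 0 := (hm₀.trans_le hx).ne'
    have hE := (hasDerivAt_besselJEnergy n hx₀).differentiableAt.hasDerivAt
    exact (hE.mul ((hasDerivAt_inv hx₀).const_mul m).exp).congr_deriv (by field_simp; ring)
  refine antitoneOn_of_hasDerivWithinAt_nonpos (convex_Ici m)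
    (fun x hx => (hasDeriv x hx).continuousAt.continuousWithinAt)
    (fun x hx => (hasDeriv x (interior_subset hx)).hasDerivWithinAt) fun x hx => ?_
  exact mul_nonpos_of_nonpos_of_nonneg
    (sub_nonpos.2 (deriv_besselJEnergy_le n (interior_subset hx))) (Real.exp_pos _).le

theorem besselJ_sq_add_besselJ_sq_le_two (x : ℝ) :
    besselJ n x ^ 2 + besselJ (n + 1) x ^ 2 ≤ 2 := by
  linarith [(sq_le_one_iff_abs_le_one _).2 (abs_besselJ_le_one n x),
    (sq_le_one_iff_abs_le_one _).2 (abs_besselJ_le_one (n + 1) x)]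

theorem mul_besselJ_sq_add_besselJ_sq_le (hx : 0 ≤ x) :
    x * (besselJ n x ^ 2 + besselJ (n + 1) x ^ 2) ≤ 18 * |2 * (n : ℝ) + 1| := by
  have hm₁ := one_le_abs_two_mul_add_one n
  set m := |2 * (n : ℝ) + 1| with hm
  have hm₀ : 0 < m := zero_lt_one.trans_le hm₁
  rcases le_total x m with hxm | hmx
  · calc x * (besselJ n x ^ 2 + besselJ (n + 1) x ^ 2)
        ≤ m * 2 := by gcongr; exact besselJ_sq_add_besselJ_sq_le_two n x
      _ ≤ 18 * m := by linarith
  · have lower := half_mul_le_besselJEnergy n hmx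
    have energy_nonneg : 0 ≤ besselJEnergy n x := le_trans (by positivity) lower
    have energy_at_threshold : besselJEnergy n m ≤ 3 * m := by
      have := besselJ_sq_add_besselJ_sq_le_two n m
      calc besselJEnergy n m ≤ 3 * m / 2 * (besselJ n m ^ 2 + besselJ (n + 1) m ^ 2) :=
            besselJEnergy_le n hm.ge
        _ ≤ 3 * m / 2 * 2 := by gcongr
        _ = 3 * m := by ring
    have energy_le : besselJEnergy n x ≤ 9 * m :=
      calc besselJEnergy n x ≤ besselJEnergy n x * Real.exp (m / x) :=
            le_mul_of_one_le_right energy_nonneg (Real.one_le_exp (by positivity))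
        _ ≤ besselJEnergy n m * Real.exp (m / m) :=
            antitoneOn_besselJEnergy_mul_exp n Set.self_mem_Ici hmx hmx
        _ ≤ 3 * m * 3 := by
            rw [div_self hm₀.ne']
            gcongr
            exact Real.exp_one_lt_three.le
        _ = 9 * m := by ring
    linarith

theorem abs_besselJ_le_div_sqrt (hx : 0 < x) : |besselJ n x| ≤ 6 * (|(n : ℝ)| + 1) / √x := by
  rw [le_div_iff₀ (Real.sqrt_pos.2 hx)]
  refine le_of_sq_le_sq ?_ (by positivity)
  have hn : |2 * (n : ℝ) + 1| ≤ 2 * |(n : ℝ)| + 1 := by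
    simpa [abs_mul] using abs_add_le (2 * (n : ℝ)) 1
  calc (|besselJ n x| * √x) ^ 2 = x * besselJ n x ^ 2 := by
        rw [mul_pow, sq_abs, Real.sq_sqrt hx.le, mul_comm]
    _ ≤ x * (besselJ n x ^ 2 + besselJ (n + 1) x ^ 2) := by
        gcongr
        exact le_add_of_nonneg_right (sq_nonneg _)
    _ ≤ 18 * (2 * |(n : ℝ)| + 1) := by
        linarith [mul_besselJ_sq_add_besselJ_sq_le n hx.le]
    _ ≤ (6 * (|(n : ℝ)| + 1)) ^ 2 := by nlinarith [abs_nonneg (n : ℝ)]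

end Decay

section EulerDerivative

/-- The Euler derivative `x J_n'(x)`, in terms of which Bessel's equation reads
`x (x J_n')' = (n² - x²) J_n`. -/
noncomputable def eulerBesselJ (n : ℤ) (x : ℝ) : ℝ :=
  x * deriv (besselJ n) x

variable (n : ℤ) (x : ℝ)

theorem eulerBesselJ_eq_half_mul_sub :
    eulerBesselJ n x = x / 2 * (besselJ (n - 1) x - besselJ (n + 1) x) := by
  rw [eulerBesselJ, (hasDerivAt_besselJ n x).deriv]
  ring

theorem eulerBesselJ_eq_mul_sub_mul :
    eulerBesselJ n x = n * besselJ n x - x * besselJ (n + 1) x := by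
  rw [eulerBesselJ_eq_half_mul_sub]
  linear_combination (1 / 2) * mul_besselJ_sub_one_add_besselJ_add_one n x

theorem continuous_eulerBesselJ : Continuous (eulerBesselJ n) := by
  have h₁ := continuous_besselJ (n - 1)
  have h₂ := continuous_besselJ (n + 1)
  simp only [funext (eulerBesselJ_eq_half_mul_sub n)]
  fun_prop

theorem eulerBesselJ_mul_eulerBesselJ (m : ℤ) (y : ℝ) :
    eulerBesselJ n x * eulerBesselJ m y = n * m * (besselJ n x * besselJ m y) -
      x * y / 2 * (besselJ (n - 1) x * besselJ (m + 1) y +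
        besselJ (n + 1) x * besselJ (m - 1) y) := by
  have hn := mul_besselJ_sub_one_add_besselJ_add_one n x
  have hm := mul_besselJ_sub_one_add_besselJ_add_one m y
  rw [eulerBesselJ_eq_half_mul_sub, eulerBesselJ_eq_half_mul_sub]
  linear_combination (1 / 4) * congr_arg₂ (· * ·) hn hm

variable {x}

theorem hasDerivAt_eulerBesselJ (hx : x ≠ 0) :
    HasDerivAt (eulerBesselJ n) ((n ^ 2 / x - x) * besselJ n x) x := by
  have h := ((hasDerivAt_besselJ_raise n hx).const_mul (n : ℝ)).sub
    ((hasDerivAt_id x).mul (hasDerivAt_besselJ_lower (n + 1) hx))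
  rw [funext (eulerBesselJ_eq_mul_sub_mul n)]
  refine h.congr_deriv ?_
  simp only [one_mul, id_eq, add_sub_cancel_right, Int.cast_add, Int.cast_one]
  field_simp
  ring

theorem abs_eulerBesselJ_le_mul_sqrt (hx : 0 < x) :
    |eulerBesselJ n x| ≤ 6 * (|(n : ℝ)| + 2) * √x := by
  have neighbor_le (m : ℤ) (hm : |(m : ℝ)| ≤ |(n : ℝ)| + 1) :
      |besselJ m x| ≤ 6 * (|(n : ℝ)| + 2) / √x :=
    (abs_besselJ_le_div_sqrt m hx).trans (by gcongr 6 * ?_ / √x; linarith)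
  have h₁ := neighbor_le (n - 1) (by simpa using abs_sub (n : ℝ) 1)
  have h₂ := neighbor_le (n + 1) (by simpa using abs_add_le (n : ℝ) 1)
  calc |eulerBesselJ n x| = x / 2 * |besselJ (n - 1) x - besselJ (n + 1) x| := by
        rw [eulerBesselJ_eq_half_mul_sub, abs_mul, abs_of_pos (half_pos hx)]
    _ ≤ x / 2 * (6 * (|(n : ℝ)| + 2) / √x + 6 * (|(n : ℝ)| + 2) / √x) := by
        gcongr
        exact (abs_sub _ _).trans (add_le_add h₁ h₂)
    _ = 6 * (|(n : ℝ)| + 2) * (x / √x) := by ring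
    _ = 6 * (|(n : ℝ)| + 2) * √x := by rw [Real.div_sqrt]

variable {a t : ℝ}

theorem hasDerivAt_besselJ_const_mul (ht : t ≠ 0) :
    HasDerivAt (fun t => besselJ n (a * t)) (eulerBesselJ n (a * t) / t) t := by
  have h := (hasDerivAt_besselJ n (a * t)).differentiableAt.hasDerivAt
  refine (h.comp t ((hasDerivAt_id t).const_mul a)).congr_deriv ?_
  rw [eulerBesselJ]
  field_simp

theorem hasDerivAt_eulerBesselJ_const_mul (ha : a ≠ 0) (ht : t ≠ 0) :
    HasDerivAt (fun t => eulerBesselJ n (a * t))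
      ((n ^ 2 / t - a ^ 2 * t) * besselJ n (a * t)) t := by
  refine ((hasDerivAt_eulerBesselJ n (mul_ne_zero ha ht)).comp t
    ((hasDerivAt_id t).const_mul a)).congr_deriv ?_
  field_simp

end EulerDerivative

section TripleProduct

/-- The integrand `J_p(at) J_q(bt) J_r(ct) t` of the triple product integral. -/
noncomputable def besselTriple (a b c : ℝ) (p q r : ℤ) (t : ℝ) : ℝ :=
  besselJ p (a * t) * besselJ q (b * t) * besselJ r (c * t) * t

/-- The Wronskian, with respect to the Euler derivative `t d/dt`, of `J_p(x)` and the product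
`J_q(y) J_r(z)`, where `x`, `y`, `z` stand for `at`, `bt`, `ct`. -/
noncomputable def besselWronskian (p q r : ℤ) (x y z : ℝ) : ℝ :=
  besselJ p x * (eulerBesselJ q y * besselJ r z + besselJ q y * eulerBesselJ r z) -
    eulerBesselJ p x * (besselJ q y * besselJ r z)

variable {a b c : ℝ} {p q r : ℤ}

theorem besselTriple_swap (t : ℝ) : besselTriple a b c p q r t = besselTriple b a c q p r t := by
  unfold besselTriple
  ring

theorem besselTriple_rotate (t : ℝ) : besselTriple a b c p q r t = besselTriple c a b r p q t := by
  unfold besselTriple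
  ring

theorem continuous_besselTriple : Continuous (besselTriple a b c p q r) := by
  have hp := continuous_besselJ p
  have hq := continuous_besselJ q
  have hr := continuous_besselJ r
  unfold besselTriple
  fun_prop

theorem abs_besselTriple_le (t : ℝ) : |besselTriple a b c p q r t| ≤ |t| := by
  rw [besselTriple, abs_mul, abs_mul, abs_mul]
  have hpq := mul_le_one₀ (abs_besselJ_le_one p (a * t)) (abs_nonneg _)
    (abs_besselJ_le_one q (b * t))
  exact mul_le_of_le_one_left (abs_nonneg t)
    (mul_le_one₀ hpq (abs_nonneg _) (abs_besselJ_le_one r (c * t)))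

theorem abs_integral_besselTriple_le_mul_self {T : ℝ} (hT : 0 ≤ T) :
    |∫ t in (0:ℝ)..T, besselTriple a b c p q r t| ≤ T * T := by
  have h : ∀ t ∈ Set.uIoc 0 T, ‖besselTriple a b c p q r t‖ ≤ T := fun t ht => by
    rw [Set.uIoc_of_le hT] at ht
    exact (abs_besselTriple_le t).trans ((abs_of_pos ht.1).trans_le ht.2)
  simpa [abs_of_nonneg hT] using intervalIntegral.norm_integral_le_of_norm_le_const h

theorem continuous_besselWronskian_const_mul :
    Continuous fun t => besselWronskian p q r (a * t) (b * t) (c * t) := by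
  have hJ := continuous_besselJ
  have hE := continuous_eulerBesselJ
  unfold besselWronskian
  fun_prop

theorem besselWronskian_zero : besselWronskian p q r 0 0 0 = 0 := by
  simp [besselWronskian, eulerBesselJ]

theorem abs_besselWronskian_le {x y z : ℝ} (hx : 0 < x) (hy : 0 < y) (hz : 0 < z) :
    |besselWronskian p q r x y z| ≤
      216 * ((|(p : ℝ)| + 2) * (|(q : ℝ)| + 2) * (|(r : ℝ)| + 2)) *
        ((x + y + z) / √(x * y * z)) := by
  have hJ (n : ℤ) {u : ℝ} (hu : 0 < u) : |besselJ n u| ≤ 6 * (|(n : ℝ)| + 2) / √u :=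
    (abs_besselJ_le_div_sqrt n hu).trans (by gcongr; norm_num)
  have hp := hJ p hx
  have hq := hJ q hy
  have hr := hJ r hz
  have hp' := abs_eulerBesselJ_le_mul_sqrt p hx
  have hq' := abs_eulerBesselJ_le_mul_sqrt q hy
  have hr' := abs_eulerBesselJ_le_mul_sqrt r hz
  set P := |(p : ℝ)| + 2
  set Q := |(q : ℝ)| + 2
  set R := |(r : ℝ)| + 2
  calc |besselWronskian p q r x y z|
      ≤ |besselJ p x| * (|eulerBesselJ q y| * |besselJ r z| + |besselJ q y| * |eulerBesselJ r z|) +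
          |eulerBesselJ p x| * (|besselJ q y| * |besselJ r z|) := by
        simp only [← abs_mul (besselJ q y), ← abs_mul (eulerBesselJ q y)]
        rw [← abs_mul (eulerBesselJ p x)]
        refine (abs_sub _ _).trans ?_
        rw [abs_mul (besselJ p x)]
        gcongr
        exact abs_add_le _ _
    _ ≤ 6 * P / √x * (6 * Q * √y * (6 * R / √z) + 6 * Q / √y * (6 * R * √z)) +
          6 * P * √x * (6 * Q / √y * (6 * R / √z)) := by gcongr
    _ = 216 * (P * Q * R) * ((√x ^ 2 + √y ^ 2 + √z ^ 2) / (√x * √y * √z)) := by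
        field_simp
        ring
    _ = 216 * (P * Q * R) * ((x + y + z) / √(x * y * z)) := by
        rw [Real.sq_sqrt hx.le, Real.sq_sqrt hy.le, Real.sq_sqrt hz.le,
          Real.sqrt_mul (by positivity), Real.sqrt_mul hx.le]

theorem abs_besselWronskian_const_mul_le (ha : 0 < a) (hb : 0 < b) (hc : 0 < c) {t : ℝ}
    (ht : 0 < t) :
    |besselWronskian p q r (a * t) (b * t) (c * t)| ≤
      216 * ((|(p : ℝ)| + 2) * (|(q : ℝ)| + 2) * (|(r : ℝ)| + 2)) *
        ((a + b + c) / √(a * b * c)) / √t := by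
  have scale : (a * t + b * t + c * t) / √(a * t * (b * t) * (c * t)) =
      (a + b + c) / √(a * b * c) / √t := by
    rw [show a * t * (b * t) * (c * t) = a * b * c * (t ^ 2 * t) by ring,
      Real.sqrt_mul (by positivity), Real.sqrt_mul (sq_nonneg t), Real.sqrt_sq ht.le]
    field_simp
  rw [mul_div_assoc, ← scale]
  exact abs_besselWronskian_le (mul_pos ha ht) (mul_pos hb ht) (mul_pos hc ht)

theorem hasDerivAt_besselWronskian_const_mul (ha : a ≠ 0) (hb : b ≠ 0) (hc : c ≠ 0)
    (hpqr : p + q + r = 0) {t : ℝ} (ht : t ≠ 0) :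
    HasDerivAt (fun t => besselWronskian p q r (a * t) (b * t) (c * t))
      ((a ^ 2 - b ^ 2 - c ^ 2) * besselTriple a b c p q r t -
        b * c * (besselTriple a b c p (q + 1) (r - 1) t +
          besselTriple a b c p (q - 1) (r + 1) t)) t := by
  have hp := hasDerivAt_besselJ_const_mul (a := a) p ht
  have hq := hasDerivAt_besselJ_const_mul (a := b) q ht
  have hr := hasDerivAt_besselJ_const_mul (a := c) r ht
  have hp' := hasDerivAt_eulerBesselJ_const_mul p ha ht
  have hq' := hasDerivAt_eulerBesselJ_const_mul q hb ht
  have hr' := hasDerivAt_eulerBesselJ_const_mul r hc ht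
  refine ((hp.mul ((hq'.mul hr).add (hq.mul hr'))).sub (hp'.mul (hq.mul hr))).congr_deriv ?_
  have hpR : (p : ℝ) = -(q + r) := by
    have : p = -(q + r) := by omega
    exact_mod_cast this
  have cross_term : eulerBesselJ q (b * t) * eulerBesselJ r (c * t) / t =
      q * r / t * (besselJ q (b * t) * besselJ r (c * t)) -
        b * c * t / 2 * (besselJ (q - 1) (b * t) * besselJ (r + 1) (c * t) +
          besselJ (q + 1) (b * t) * besselJ (r - 1) (c * t)) := by
    rw [eulerBesselJ_mul_eulerBesselJ]
    field_simp
  simp only [Pi.add_apply, Pi.mul_apply, besselTriple, hpR]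
  linear_combination (2 * besselJ p (a * t)) * cross_term

theorem integral_besselTriple_recurrence (ha : a ≠ 0) (hb : b ≠ 0) (hc : c ≠ 0)
    (hpqr : p + q + r = 0) {T : ℝ} (hT : 0 ≤ T) :
    (a ^ 2 - b ^ 2 - c ^ 2) * (∫ t in (0:ℝ)..T, besselTriple a b c p q r t) -
      b * c * ((∫ t in (0:ℝ)..T, besselTriple a b c p (q + 1) (r - 1) t) +
        ∫ t in (0:ℝ)..T, besselTriple a b c p (q - 1) (r + 1) t) =
      besselWronskian p q r (a * T) (b * T) (c * T) := by
  have hint (q r : ℤ) : IntervalIntegrable (besselTriple a b c p q r) volume 0 T :=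
    continuous_besselTriple.intervalIntegrable 0 T
  have hsum := ((hint (q + 1) (r - 1)).add (hint (q - 1) (r + 1))).const_mul (b * c)
  have hmain := (hint q r).const_mul (a ^ 2 - b ^ 2 - c ^ 2)
  have ftc := intervalIntegral.integral_eq_sub_of_hasDerivAt_of_le hT
    continuous_besselWronskian_const_mul.continuousOn
    (fun t ht => hasDerivAt_besselWronskian_const_mul ha hb hc hpqr ht.1.ne') (hmain.sub hsum)
  rw [intervalIntegral.integral_sub hmain hsum] at ftc
  simpa only [intervalIntegral.integral_const_mul, mul_zero, besselWronskian_zero, sub_zero,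
    intervalIntegral.integral_add (hint (q + 1) (r - 1)) (hint (q - 1) (r + 1))] using ftc

end TripleProduct

section WeightedRecurrence

variable {E : Type*} [NormedAddCommGroup E] [NormedSpace ℝ E]

theorem mul_norm_le_norm_smul_sub_smul_add {A B : ℝ} (hA : 0 ≤ A) (hB : 0 ≤ B) (x y z : E) :
    A * ‖x‖ ≤ ‖A • x - B • (y + z)‖ + B * (‖y‖ + ‖z‖) :=
  calc A * ‖x‖ = ‖A • x‖ := by rw [norm_smul, Real.norm_of_nonneg hA]
    _ ≤ ‖A • x - B • (y + z)‖ + ‖B • (y + z)‖ := norm_le_norm_sub_add _ _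
    _ ≤ ‖A • x - B • (y + z)‖ + B * (‖y‖ + ‖z‖) := by
      rw [norm_smul, Real.norm_of_nonneg hB]
      gcongr
      exact norm_add_le _ _

theorem norm_mul_pow_natAbs_le_of_recurrence {A B δ L : ℝ} (hB : 0 ≤ B) (hδ₀ : 0 < δ)
    (hδ₁ : δ ≤ 1) (hAB : 2 * B / δ < A) {u : ℤ → E}
    (hu : BddAbove (Set.range fun k => ‖u k‖ * δ ^ k.natAbs))
    (hrec : ∀ k, ‖A • u k - B • (u (k + 1) + u (k - 1))‖ * δ ^ k.natAbs ≤ L) (k : ℤ) :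
    ‖u k‖ * δ ^ k.natAbs ≤ L / (A - 2 * B / δ) := by
  set S := ⨆ k, ‖u k‖ * δ ^ k.natAbs
  have le_sup (k : ℤ) : ‖u k‖ * δ ^ k.natAbs ≤ S := le_ciSup hu k
  have hA : 0 < A := lt_of_le_of_lt (by positivity) hAB
  have neighbor_le (k j : ℤ) (hj : j.natAbs ≤ k.natAbs + 1) : ‖u j‖ * δ ^ k.natAbs ≤ S / δ := by
    rw [le_div_iff₀ hδ₀, mul_assoc, ← pow_succ]
    refine le_trans ?_ (le_sup j)
    gcongr ?_ * ?_
    exact pow_le_pow_of_le_one hδ₀.le hδ₁ hj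
  have maximum_principle (k : ℤ) : ‖u k‖ * δ ^ k.natAbs ≤ (2 * B / δ * S + L) / A := by
    rw [le_div_iff₀' hA]
    calc A * (‖u k‖ * δ ^ k.natAbs)
        ≤ (‖A • u k - B • (u (k + 1) + u (k - 1))‖ + B * (‖u (k + 1)‖ + ‖u (k - 1)‖)) *
            δ ^ k.natAbs := by
          rw [← mul_assoc]
          gcongr
          exact mul_norm_le_norm_smul_sub_smul_add hA.le hB _ _ _
      _ = ‖A • u k - B • (u (k + 1) + u (k - 1))‖ * δ ^ k.natAbs +
            B * (‖u (k + 1)‖ * δ ^ k.natAbs + ‖u (k - 1)‖ * δ ^ k.natAbs) := by ring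
      _ ≤ L + B * (S / δ + S / δ) := by
          gcongr
          exacts [hrec k, neighbor_le k (k + 1) (by omega), neighbor_le k (k - 1) (by omega)]
      _ = 2 * B / δ * S + L := by ring
  have sup_le : S ≤ (2 * B / δ * S + L) / A := ciSup_le maximum_principle
  rw [le_div_iff₀ hA] at sup_le
  refine (le_sup k).trans ?_
  rw [le_div_iff₀ (sub_pos.2 hAB)]
  linarith

theorem exists_add_one_sq_mul_pow_le {δ : ℝ} (hδ₀ : 0 < δ) (hδ₁ : δ < 1) :
    ∃ K, ∀ n : ℕ, ((n : ℝ) + 1) ^ 2 * δ ^ n ≤ K := by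
  have lim := tendsto_pow_const_mul_const_pow_of_abs_lt_one 2 ((abs_of_pos hδ₀).trans_lt hδ₁)
  obtain ⟨K, hK⟩ := lim.bddAbove_range
  refine ⟨K / δ, fun n => (le_div_iff₀ hδ₀).2 ?_⟩
  simpa [pow_succ, mul_assoc] using hK ⟨n + 1, rfl⟩

theorem abs_add_add_two_le (x y : ℝ) : |x + y| + 2 ≤ (|x| + 2) * (|y| + 1) := by
  nlinarith [abs_add_le x y, abs_nonneg x, abs_nonneg y]

theorem exists_order_weight_mul_pow_natAbs_le {δ : ℝ} (hδ₀ : 0 < δ) (hδ₁ : δ < 1) (q r : ℤ) :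
    ∃ K, ∀ k : ℤ,
      (|((q + k : ℤ) : ℝ)| + 2) * (|((r - k : ℤ) : ℝ)| + 2) * δ ^ k.natAbs ≤ K := by
  obtain ⟨K, hK⟩ := exists_add_one_sq_mul_pow_le hδ₀ hδ₁
  refine ⟨(|(q : ℝ)| + 2) * (|(r : ℝ)| + 2) * K, fun k => ?_⟩
  have hk : (k.natAbs : ℝ) = |(k : ℝ)| := by rw [Nat.cast_natAbs, Int.cast_abs]
  have hq : |((q + k : ℤ) : ℝ)| + 2 ≤ (|(q : ℝ)| + 2) * (|(k : ℝ)| + 1) := by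
    simpa using abs_add_add_two_le (q : ℝ) k
  have hr : |((r - k : ℤ) : ℝ)| + 2 ≤ (|(r : ℝ)| + 2) * (|(k : ℝ)| + 1) := by
    simpa [sub_eq_add_neg] using abs_add_add_two_le (r : ℝ) (-k)
  calc (|((q + k : ℤ) : ℝ)| + 2) * (|((r - k : ℤ) : ℝ)| + 2) * δ ^ k.natAbs
      ≤ (|(q : ℝ)| + 2) * (|(k : ℝ)| + 1) * ((|(r : ℝ)| + 2) * (|(k : ℝ)| + 1)) *
          δ ^ k.natAbs := by gcongr
    _ = (|(q : ℝ)| + 2) * (|(r : ℝ)| + 2) * (((k.natAbs : ℝ) + 1) ^ 2 * δ ^ k.natAbs) := by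
        rw [hk]
        ring
    _ ≤ (|(q : ℝ)| + 2) * (|(r : ℝ)| + 2) * K := by
        gcongr
        exact hK _

end WeightedRecurrence

section TripleIntegral

variable {a b c : ℝ} {p q r : ℤ}

theorem abs_integral_besselTriple_le_of_weight {δ K : ℝ} (ha : 0 < a) (hb : 0 < b) (hc : 0 < c)
    (hpqr : p + q + r = 0) (hδ₀ : 0 < δ) (hδ₁ : δ ≤ 1)
    (hδ : 2 * (b * c) / δ < a ^ 2 - b ^ 2 - c ^ 2)
    (hK : ∀ k : ℤ, (|((q + k : ℤ) : ℝ)| + 2) * (|((r - k : ℤ) : ℝ)| + 2) * δ ^ k.natAbs ≤ K)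
    {T : ℝ} (hT : 0 < T) :
    |∫ t in (0:ℝ)..T, besselTriple a b c p q r t| ≤
      216 * (|(p : ℝ)| + 2) * ((a + b + c) / √(a * b * c)) * K / √T /
        (a ^ 2 - b ^ 2 - c ^ 2 - 2 * (b * c) / δ) := by
  set I : ℤ → ℝ := fun k => ∫ t in (0:ℝ)..T, besselTriple a b c p (q + k) (r - k) t with hI
  set C := 216 * (|(p : ℝ)| + 2) * ((a + b + c) / √(a * b * c))
  have bounded : BddAbove (Set.range fun k => ‖I k‖ * δ ^ k.natAbs) := by
    refine ⟨T * T, Set.forall_mem_range.2 fun k => ?_⟩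
    exact (mul_le_of_le_one_right (norm_nonneg _) (pow_le_one₀ hδ₀.le hδ₁)).trans
      (abs_integral_besselTriple_le_mul_self hT.le)
  have recurrence (k : ℤ) :
      (a ^ 2 - b ^ 2 - c ^ 2) • I k - (b * c) • (I (k + 1) + I (k - 1)) =
        besselWronskian p (q + k) (r - k) (a * T) (b * T) (c * T) := by
    rw [← integral_besselTriple_recurrence ha.ne' hb.ne' hc.ne' (by omega) hT.le]
    simp only [hI, smul_eq_mul]
    ring_nf
  have boundary_le (k : ℤ) :
      ‖(a ^ 2 - b ^ 2 - c ^ 2) • I k - (b * c) • (I (k + 1) + I (k - 1))‖ * δ ^ k.natAbs ≤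
        C * K / √T := by
    rw [recurrence]
    calc |besselWronskian p (q + k) (r - k) (a * T) (b * T) (c * T)| * δ ^ k.natAbs
        ≤ 216 * ((|(p : ℝ)| + 2) * (|((q + k : ℤ) : ℝ)| + 2) * (|((r - k : ℤ) : ℝ)| + 2)) *
            ((a + b + c) / √(a * b * c)) / √T * δ ^ k.natAbs := by
          gcongr
          exact abs_besselWronskian_const_mul_le ha hb hc hT
      _ = C * ((|((q + k : ℤ) : ℝ)| + 2) * (|((r - k : ℤ) : ℝ)| + 2) * δ ^ k.natAbs) / √T := by
          ring
      _ ≤ C * K / √T := by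
          gcongr
          exact hK k
  simpa [hI] using norm_mul_pow_natAbs_le_of_recurrence (mul_pos hb hc).le hδ₀ hδ₁ hδ bounded
    boundary_le 0

theorem isBigO_integral_besselTriple_of_add_lt (hb : 0 < b) (hc : 0 < c) (habc : b + c < a)
    (hpqr : p + q + r = 0) :
    (fun T => ∫ t in (0:ℝ)..T, besselTriple a b c p q r t) =O[atTop] fun T => (√T)⁻¹ := by
  have ha : 0 < a := by linarith
  have dominant : 2 * (b * c) < a ^ 2 - b ^ 2 - c ^ 2 := by nlinarith
  have hA : 0 < a ^ 2 - b ^ 2 - c ^ 2 := lt_trans (by positivity) dominant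
  obtain ⟨δ, hδ, hδ₁⟩ := exists_between ((div_lt_one hA).2 dominant)
  have hδ₀ : 0 < δ := lt_trans (by positivity) hδ
  obtain ⟨K, hK⟩ := exists_order_weight_mul_pow_natAbs_le hδ₀ hδ₁ q r
  refine IsBigO.of_bound (216 * (|(p : ℝ)| + 2) * ((a + b + c) / √(a * b * c)) * K /
    (a ^ 2 - b ^ 2 - c ^ 2 - 2 * (b * c) / δ)) ?_
  filter_upwards [eventually_gt_atTop 0] with T hT
  rw [Real.norm_eq_abs, norm_inv, Real.norm_of_nonneg (Real.sqrt_nonneg T), ← div_eq_mul_inv,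
    div_right_comm]
  exact abs_integral_besselTriple_le_of_weight ha hb hc hpqr hδ₀ hδ₁.le
    ((div_lt_comm₀ hA hδ₀).1 hδ) hK hT

theorem isBigO_integral_besselTriple (ha : 0 < a) (hb : 0 < b) (hc : 0 < c)
    (hnotri : b + c < a ∨ a < |b - c|) (hpqr : p + q + r = 0) :
    (fun T => ∫ t in (0:ℝ)..T, besselTriple a b c p q r t) =O[atTop] fun T => (√T)⁻¹ := by
  rcases hnotri with h | h
  · exact isBigO_integral_besselTriple_of_add_lt hb hc h hpqr
  rcases lt_abs.1 h with h | h
  · simp only [besselTriple_swap (a := a)]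
    exact isBigO_integral_besselTriple_of_add_lt ha hc (by linarith) (by omega)
  · simp only [besselTriple_rotate (a := a)]
    exact isBigO_integral_besselTriple_of_add_lt ha hb (by linarith) (by omega)

theorem besselTriple_neg_add (t : ℝ) :
    besselTriple a b c p q (-(p + q)) t =
      (-1) ^ (p + q) * (besselJ p (a * t) * besselJ q (b * t) * besselJ (p + q) (c * t) * t) := by
  rw [besselTriple, besselJ_neg]
  ring

end TripleIntegral

theorem stmt_9 (ρ₁ ρ₂ ρ₃ : ℝ) (ℓ₁ ℓ₂ : ℤ)
    (h₁ : 0 < ρ₁) (h₂ : 0 < ρ₂) (h₃ : 0 < ρ₃)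
    (hnotri : ρ₁ > ρ₂ + ρ₃ ∨ ρ₁ < |ρ₂ - ρ₃|) :
    Tendsto
      (fun T : ℝ => ∫ lam in (0:ℝ)..T,
        besselJ ℓ₁ (ρ₁ * lam) * besselJ ℓ₂ (ρ₂ * lam) *
          besselJ (ℓ₁ + ℓ₂) (ρ₃ * lam) * lam)
      atTop (𝓝 0) := by
  have decay := isBigO_integral_besselTriple h₁ h₂ h₃ hnotri (add_neg_cancel (ℓ₁ + ℓ₂))
  simp only [besselTriple_neg_add, intervalIntegral.integral_const_mul] at decay
  rw [isBigO_const_mul_left_iff (zpow_ne_zero _ (by norm_num))] at decay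
  exact decay.trans_tendsto (tendsto_inv_atTop_zero.comp Real.tendsto_sqrt_atTop)
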